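/- For all integers n ≥ 0, B̄_{2,9}(12n+7) ≡ 0 (mod 8) and B̄_{2,9}(12n+1) ≡ 0 (mod 2). -/

import Mathlib

/-- `biregOverpartitions l1 l2 n` is the number of `(l1, l2)`-biregular overpartitions of `n`:
overpartitions of `n` (partitions in which the first occurrence of each part size may be
overlined) none of whose parts is divisible by `l1` or by `l2`.  Each partition of `n` with
admissible parts contributes `2 ^ (number of distinct part sizes)` overpartitions,
corresponding to the choice of which part sizes have their first occurrence overlined. -/
def biregOverpartitions (l1 l2 n : ℕ) : ℕ :=
  ∑ p : Nat.Partition n,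
    if ∀ x ∈ p.parts, ¬ l1 ∣ x ∧ ¬ l2 ∣ x then 2 ^ p.parts.toFinset.card else 0

/-! Write `d(k)` for the number of divisors of `k` that are admissible as parts. Since
`(1 + X ^ a) / (1 - X ^ a) = 1 + 2 L_a` with `L_a = ∑_{j ≥ 1} X ^ (a * j)`, the generating function
`∏_a (1 + 2 L_a)` is congruent to `1 + 2 ∑ L_a + 2 ((∑ L_a) ^ 2 - ∑ L_a ^ 2)` modulo `8`, whose
coefficient at `n > 0` is `2 d(n) + 2 ∑_{x + v = n} d(x) d(v) - 2 ∑_{a ∣ n} (n / a - 1)`.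

If `n ≡ 7 (mod 12)`, every divisor of `n` is admissible, `σ(n) ≡ 0 (mod 4)` and `d(n)` is even. The
convolution is divisible by `4`: it is symmetric with no diagonal term, and each `d(x) d(v)` is
even. Indeed let `v` be the odd one of the two. If `3 ∣ v`, then `a ↔ 3 a` pairs off the admissible
divisors of `v`, because multiples of `9` are excluded. If `3 ∤ v` and `v` is not a square, then
`d(v)` is the number of all divisors of `v`, hence even. Otherwise `v ≡ 1 (mod 3)`, so `3 ∣ x` and
`d(x)` is even.
-/

open Finset PowerSeries
open scoped PowerSeries.WithPiTopology

section CommRing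

variable {ι R : Type*} [CommRing R]

lemma two_dvd_sum_sq_sub_sum_sq (s : Finset ι) (f : ι → R) :
    2 ∣ (∑ i ∈ s, f i) ^ 2 - ∑ i ∈ s, f i ^ 2 := by
  classical
  induction s using Finset.induction_on with
  | empty => simp
  | insert i s hi ih =>
    obtain ⟨c, hc⟩ := ih
    rw [sum_insert hi, sum_insert hi]
    exact ⟨c + f i * ∑ j ∈ s, f j, by linear_combination hc⟩

lemma eight_dvd_prod_one_add_two_mul_sub (s : Finset ι) (f : ι → R) :
    8 ∣ ∏ i ∈ s, (1 + 2 * f i) -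
      (1 + 2 * ∑ i ∈ s, f i + 2 * ((∑ i ∈ s, f i) ^ 2 - ∑ i ∈ s, f i ^ 2)) := by
  classical
  induction s using Finset.induction_on with
  | empty => simp
  | insert i s hi ih =>
    obtain ⟨c, hc⟩ := ih
    obtain ⟨d, hd⟩ := two_dvd_sum_sq_sub_sum_sq s f
    rw [prod_insert hi, sum_insert hi, sum_insert hi]
    exact ⟨(1 + 2 * f i) * c + f i * d, by linear_combination (1 + 2 * f i) * hc + 4 * f i * hd⟩

end CommRing

section LambertSeries

variable {R : Type*} [CommSemiring R]

variable (R) in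
/-- The Lambert series `∑_{j ≥ 1} X ^ (a * j)`, which is `X ^ a / (1 - X ^ a)` for `a ≠ 0`. -/
def lambertSeries (a : ℕ) : R⟦X⟧ :=
  PowerSeries.mk fun n ↦ if n ≠ 0 ∧ a ∣ n then 1 else 0

lemma tsum_smul_X_pow_mul_succ [TopologicalSpace R] [T2Space R] {a : ℕ} (ha : a ≠ 0) (c : R) :
    ∑' j, c • (X : R⟦X⟧) ^ (a * (j + 1)) = c • lambertSeries R a := by
  ext n
  rw [(Nat.Partition.summable_genFun_term' (fun _ _ ↦ c) ha).map_tsum _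
    (WithPiTopology.continuous_coeff _ _)]
  simp only [map_smul, coeff_X_pow, lambertSeries, coeff_mk]
  by_cases h : n ≠ 0 ∧ a ∣ n
  · obtain ⟨hn, k, rfl⟩ := h
    obtain ⟨k, rfl⟩ := Nat.exists_eq_succ_of_ne_zero (right_ne_zero_of_mul hn)
    rw [tsum_eq_single k fun j hj ↦ by simp [ha, hj.symm]]
    simp [ha]
  · have hne (j : ℕ) : n ≠ a * (j + 1) := by
      rintro rfl
      exact h ⟨mul_ne_zero ha j.succ_ne_zero, dvd_mul_right a _⟩
    simp only [hne, h, if_false, smul_zero, tsum_zero]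

lemma genFun_ite_mem {s : Finset ℕ} (hs : 0 ∉ s) (c : R) :
    Nat.Partition.genFun (fun a _ ↦ if a ∈ s then c else 0) =
      ∏ a ∈ s, (1 + c • lambertSeries R a) := by
  let _ : TopologicalSpace R := ⊥
  have : DiscreteTopology R := ⟨rfl⟩
  let F (a : ℕ) : R⟦X⟧ := if a ∈ s then 1 + c • lambertSeries R a else 1
  have hF : HasProd F (∏ a ∈ s, F a) := hasProd_prod_of_ne_finset_one fun a ha ↦ if_neg ha
  have hF_zero (a : ℕ) (ha : a ∉ Set.range Nat.succ) : F a = 1 := by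
    obtain rfl : a = 0 := by simpa using ha
    exact if_neg hs
  have hgen := Nat.Partition.hasProd_genFun fun a _ ↦ if a ∈ s then c else 0
  have hterm : (fun i ↦ 1 + ∑' j, (if i + 1 ∈ s then c else 0) • (X : R⟦X⟧) ^ ((i + 1) * (j + 1))) =
      F ∘ Nat.succ := by
    ext1 i
    rw [tsum_smul_X_pow_mul_succ i.succ_ne_zero]
    by_cases h : i + 1 ∈ s <;> simp [F, h]
  rw [hterm, Nat.succ_injective.hasProd_iff hF_zero] at hgen
  rw [hgen.unique hF]
  exact prod_congr rfl fun a ha ↦ if_pos ha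

lemma coeff_lambertSeries_sq (a n : ℕ) :
    coeff n (lambertSeries R a ^ 2) = if a ∣ n then (((n - 1) / a : ℕ) : R) else 0 := by
  rw [sq, coeff_mul, Nat.sum_antidiagonal_eq_sum_range_succ_mk]
  simp only [lambertSeries, coeff_mk, ← ite_and, mul_ite, mul_one, mul_zero, sum_boole]
  split_ifs with h
  · rw [← Nat.Ioc_filter_dvd_card_eq_div]
    congr 2
    ext x
    simp only [mem_filter, mem_range, mem_Ioc]
    have hsub (hx : x ≤ n) : a ∣ n - x ↔ a ∣ x := Nat.dvd_sub_iff_right hx h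
    grind
  · rw [filter_false_of_mem, card_empty, Nat.cast_zero]
    rintro x hx ⟨⟨-, hanx⟩, -, hax⟩
    exact h (Nat.add_sub_of_le (mem_range_succ_iff.1 hx) ▸ dvd_add hax hanx)

end LambertSeries

section Restricted

variable (P : ℕ → Prop) [DecidablePred P]

/-- The number of overpartitions of `n` all of whose parts satisfy `P`, counted as
`2 ^ (number of distinct part sizes)` for each underlying partition. -/
def restrictedOverpartitions (n : ℕ) : ℕ :=
  ∑ p : n.Partition, if ∀ x ∈ p.parts, P x then 2 ^ #p.parts.toFinset else 0

/-- The divisors of `n` that satisfy `P`. -/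
def restrictedDivisors (n : ℕ) : Finset ℕ := {a ∈ n.divisors | P a}

lemma restrictedOverpartitions_eq_coeff_prod (n : ℕ) :
    (restrictedOverpartitions P n : ℤ) =
      coeff n (∏ a ∈ Icc 1 n with P a, (1 + 2 * lambertSeries ℤ a)) := by
  have hgen := genFun_ite_mem (s := {a ∈ Icc 1 n | P a}) (by simp) (2 : ℤ)
  simp only [smul_eq_C_mul, map_ofNat] at hgen
  rw [← hgen, Nat.Partition.coeff_genFun, restrictedOverpartitions, Nat.cast_sum]
  refine sum_congr rfl fun p _ ↦ ?_
  have hparts : (∀ a ∈ p.parts, P a) ↔ ∀ a ∈ p.parts.toFinset, a ∈ {a ∈ Icc 1 n | P a} := by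
    simp only [Multiset.mem_toFinset, mem_filter, mem_Icc]
    exact forall₂_congr fun a ha ↦
      (and_iff_right ⟨p.parts_pos ha, p.le_of_mem_parts ha⟩).symm
  rw [Finsupp.prod, Multiset.toFinsupp_support, prod_ite_zero, prod_const]
  simp only [hparts, Nat.cast_ite, Nat.cast_pow, Nat.cast_ofNat, Nat.cast_zero]

lemma filter_Icc_eq_restrictedDivisors {k n : ℕ} (hkn : k ≤ n) :
    {a ∈ {a ∈ Icc 1 n | P a} | k ≠ 0 ∧ a ∣ k} = restrictedDivisors P k := by
  ext a
  simp only [restrictedDivisors, mem_filter, mem_Icc, Nat.mem_divisors]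
  have hle (hk : k ≠ 0) (ha : a ∣ k) : 1 ≤ a ∧ a ≤ n :=
    have hk' := Nat.pos_of_ne_zero hk
    ⟨Nat.pos_of_dvd_of_pos ha hk', (Nat.le_of_dvd hk' ha).trans hkn⟩
  tauto

lemma coeff_sum_lambertSeries {k n : ℕ} (hkn : k ≤ n) :
    coeff k (∑ a ∈ Icc 1 n with P a, lambertSeries ℤ a) = #(restrictedDivisors P k) := by
  simp only [map_sum, lambertSeries, coeff_mk, sum_boole, filter_Icc_eq_restrictedDivisors P hkn]

lemma coeff_sq_sum_lambertSeries (n : ℕ) :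
    coeff n ((∑ a ∈ Icc 1 n with P a, lambertSeries ℤ a) ^ 2) =
      ∑ x ∈ antidiagonal n, (#(restrictedDivisors P x.1) * #(restrictedDivisors P x.2) : ℤ) := by
  rw [sq, coeff_mul]
  refine sum_congr rfl fun x hx ↦ ?_
  rw [coeff_sum_lambertSeries P (HasAntidiagonal.antidiagonal.fst_le hx),
    coeff_sum_lambertSeries P (HasAntidiagonal.antidiagonal.snd_le hx)]

lemma coeff_sum_lambertSeries_sq {n : ℕ} (hn : n ≠ 0) :
    coeff n (∑ a ∈ Icc 1 n with P a, lambertSeries ℤ a ^ 2) =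
      ∑ a ∈ restrictedDivisors P n, ((n / a : ℕ) - 1 : ℤ) := by
  simp only [map_sum, coeff_lambertSeries_sq, ← sum_filter,
    ← filter_Icc_eq_restrictedDivisors P le_rfl, hn, ne_eq, not_false_eq_true, true_and]
  refine sum_congr rfl fun a ha ↦ ?_
  obtain ⟨n, rfl⟩ := Nat.exists_eq_succ_of_ne_zero hn
  rw [Nat.succ_div_of_dvd (mem_filter.1 ha).2]
  simp

theorem restrictedOverpartitions_add_modEq {n : ℕ} (hn : n ≠ 0) :
    restrictedOverpartitions P n + 2 * ∑ a ∈ restrictedDivisors P n, n / a ≡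
      4 * #(restrictedDivisors P n) +
        2 * ∑ x ∈ antidiagonal n, #(restrictedDivisors P x.1) * #(restrictedDivisors P x.2)
      [MOD 8] := by
  rw [← Int.natCast_modEq_iff, Int.modEq_comm, Int.modEq_iff_dvd]
  obtain ⟨c, hc⟩ := eight_dvd_prod_one_add_two_mul_sub {a ∈ Icc 1 n | P a} (lambertSeries ℤ)
  use coeff n c
  have hcoeff := congrArg (coeff n) hc
  simp only [← map_ofNat (C (R := ℤ)), map_sub, map_add, coeff_C_mul] at hcoeff
  simp only [map_ofNat, coeff_one, hn, if_false, coeff_sum_lambertSeries_sq P hn,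
    coeff_sq_sum_lambertSeries, coeff_sum_lambertSeries P le_rfl, sum_sub_distrib,
    ← restrictedOverpartitions_eq_coeff_prod] at hcoeff
  simp only [sum_const, nsmul_eq_mul, mul_one] at hcoeff
  push_cast at hcoeff ⊢
  linear_combination hcoeff

end Restricted

lemma sum_divisors_eq_zero_of_add_div_eq_zero {R : Type*} [AddCommMonoid R] {n : ℕ}
    (hn : ¬ IsSquare n) (f : ℕ → R) (hf : ∀ d ∈ n.divisors, f d + f (n / d) = 0) :
    ∑ d ∈ n.divisors, f d = 0 := by
  refine sum_involution (fun d _ ↦ n / d) hf (fun d hd _ hfix ↦ hn ⟨d, ?_⟩)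
    (fun d hd ↦ ?_) (fun d hd ↦ ?_)
  all_goals obtain ⟨hdn, hn0⟩ := Nat.mem_divisors.1 hd
  · nth_rw 1 [← Nat.div_mul_cancel hdn, hfix]
  · exact Nat.mem_divisors.2 ⟨Nat.div_dvd_of_dvd hdn, hn0⟩
  · exact Nat.div_div_self hdn hn0

lemma even_card_divisors_of_not_isSquare {n : ℕ} (hn : ¬ IsSquare n) : Even #n.divisors := by
  rw [← ZMod.natCast_eq_zero_iff_even, card_eq_sum_ones, Nat.cast_sum]
  exact sum_divisors_eq_zero_of_add_div_eq_zero hn _ fun _ _ ↦ by decide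

lemma not_isSquare_of_mod_four_eq_three {n : ℕ} (hn : n % 4 = 3) : ¬ IsSquare n := by
  rintro ⟨s, rfl⟩
  have hs : ((s * s : ℕ) : ZMod 4) = 3 := (ZMod.natCast_eq_natCast_iff' _ 3 4).2 hn
  have hsq : ∀ x : ZMod 4, x * x ≠ 3 := by decide
  exact hsq s (by rw [← hs, Nat.cast_mul])

lemma four_dvd_sum_divisors {n : ℕ} (hn : n % 4 = 3) : 4 ∣ ∑ d ∈ n.divisors, d := by
  rw [← ZMod.natCast_eq_zero_iff, Nat.cast_sum]
  refine sum_divisors_eq_zero_of_add_div_eq_zero (not_isSquare_of_mod_four_eq_three hn) _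
    fun d hd ↦ ?_
  have hmul : (d : ZMod 4) * (n / d : ℕ) = 3 := by
    rw [← Nat.cast_mul, Nat.mul_div_cancel' (Nat.dvd_of_mem_divisors hd)]
    exact (ZMod.natCast_eq_natCast_iff' n 3 4).2 hn
  have hadd : ∀ x y : ZMod 4, x * y = 3 → x + y = 0 := by decide
  exact hadd _ _ hmul

lemma four_dvd_sum_antidiagonal_mul {m : ℕ} (hm : Odd m) {f : ℕ → ℕ}
    (hf : ∀ x ∈ antidiagonal m, Even (f x.1 * f x.2)) :
    4 ∣ ∑ x ∈ antidiagonal m, f x.1 * f x.2 := by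
  rw [← ZMod.natCast_eq_zero_iff, Nat.cast_sum]
  refine sum_involution (fun x _ ↦ x.swap) (fun x hx ↦ ?_) (fun x hx _ hfix ↦ ?_)
    (fun x hx ↦ HasAntidiagonal.swap_mem_antidiagonal.2 hx) (fun x _ ↦ x.swap_swap)
  · obtain ⟨k, hk⟩ := hf x hx
    rw [Prod.fst_swap, Prod.snd_swap, mul_comm (f x.2), hk, ← Nat.cast_add,
      ZMod.natCast_eq_zero_iff]
    omega
  · have hsum : x.1 + x.2 = m := mem_antidiagonal.1 hx
    have heq : x.2 = x.1 := congrArg Prod.fst hfix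
    exact Nat.not_even_iff_odd.2 hm ⟨x.1, by rw [← hsum, heq]⟩

section Congruence

variable {P : ℕ → Prop} [DecidablePred P]

lemma even_card_restrictedDivisors_of_prime_dvd {p n : ℕ} (hp : p.Prime) (hpn : p ∣ n)
    (hmul : ∀ a, ¬ p ∣ a → (P (p * a) ↔ P a)) (hsq : ∀ a, ¬ P (p * (p * a))) :
    Even #(restrictedDivisors P n) := by
  have hbij : #{a ∈ restrictedDivisors P n | ¬ p ∣ a} = #{a ∈ restrictedDivisors P n | p ∣ a} := by
    refine card_nbij' (p * ·) (· / p) (fun a ha ↦ ?_) (fun a ha ↦ ?_) (fun a _ ↦ ?_) (fun a ha ↦ ?_)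
    all_goals simp only [restrictedDivisors, coe_filter, mem_filter, Nat.mem_divisors,
      Set.mem_ofPred_eq] at *
    · obtain ⟨⟨⟨han, hn⟩, hPa⟩, hpa⟩ := ha
      have hcop : p.Coprime a := (Nat.Prime.coprime_iff_not_dvd hp).2 hpa
      exact ⟨⟨⟨hcop.mul_dvd_of_dvd_of_dvd hpn han, hn⟩, (hmul a hpa).2 hPa⟩, dvd_mul_right p a⟩
    · obtain ⟨⟨⟨han, hn⟩, hPa⟩, a, rfl⟩ := ha
      have hpa : ¬ p ∣ a := by
        rintro ⟨a, rfl⟩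
        exact hsq a hPa
      rw [Nat.mul_div_cancel_left a hp.pos]
      exact ⟨⟨⟨dvd_of_mul_left_dvd han, hn⟩, (hmul a hpa).1 hPa⟩, hpa⟩
    · exact Nat.mul_div_cancel_left a hp.pos
    · exact Nat.mul_div_cancel' ha.2
  exact ⟨_, by rw [← card_filter_add_card_filter_not (p ∣ ·), hbij]⟩

lemma restrictedDivisors_eq_divisors (hP : ∀ a, ¬ 2 ∣ a → ¬ 3 ∣ a → P a) {n : ℕ}
    (h2 : ¬ 2 ∣ n) (h3 : ¬ 3 ∣ n) : restrictedDivisors P n = n.divisors :=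
  filter_true_of_mem fun a ha ↦
    have han := Nat.dvd_of_mem_divisors ha
    hP a (fun h ↦ h2 (h.trans han)) (fun h ↦ h3 (h.trans han))

lemma even_card_restrictedDivisors_left_or_right (hP : ∀ a, ¬ 2 ∣ a → ¬ 3 ∣ a → P a)
    (hP3 : ∀ a, ¬ 3 ∣ a → (P (3 * a) ↔ P a)) (hP9 : ∀ a, ¬ P (3 * (3 * a))) {x v : ℕ}
    (hv : ¬ 2 ∣ v) (hxv : (x + v) % 3 = 1) :
    Even #(restrictedDivisors P x) ∨ Even #(restrictedDivisors P v) := by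
  by_cases h3 : 3 ∣ v
  · exact .inr (even_card_restrictedDivisors_of_prime_dvd Nat.prime_three h3 hP3 hP9)
  by_cases hsq : IsSquare v
  · have hv_mod : v % 3 = 1 := by
      obtain ⟨s, rfl⟩ := hsq
      rw [Nat.mul_mod]
      have : ¬ 3 ∣ s := fun h ↦ h3 (h.mul_right s)
      obtain h | h : s % 3 = 1 ∨ s % 3 = 2 := by omega
      all_goals simp [h]
    exact .inl (even_card_restrictedDivisors_of_prime_dvd Nat.prime_three (by omega) hP3 hP9)
  · rw [restrictedDivisors_eq_divisors hP hv h3]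
    exact .inr (even_card_divisors_of_not_isSquare hsq)

theorem eight_dvd_restrictedOverpartitions (hP : ∀ a, ¬ 2 ∣ a → ¬ 3 ∣ a → P a)
    (hP3 : ∀ a, ¬ 3 ∣ a → (P (3 * a) ↔ P a)) (hP9 : ∀ a, ¬ P (3 * (3 * a))) {m : ℕ}
    (hm : m % 12 = 7) : 8 ∣ restrictedOverpartitions P m := by
  have hcongr := restrictedOverpartitions_add_modEq P (n := m) (by omega)
  rw [restrictedDivisors_eq_divisors hP (by omega) (by omega),
    Nat.sum_div_divisors m fun d ↦ d] at hcongr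
  have hsigma : 4 ∣ ∑ d ∈ m.divisors, d := four_dvd_sum_divisors (by omega)
  have hcard : 2 ∣ #m.divisors :=
    (even_card_divisors_of_not_isSquare (not_isSquare_of_mod_four_eq_three (by omega))).two_dvd
  have hconv : 4 ∣ ∑ x ∈ antidiagonal m,
      #(restrictedDivisors P x.1) * #(restrictedDivisors P x.2) := by
    refine four_dvd_sum_antidiagonal_mul (f := fun k ↦ #(restrictedDivisors P k))
      (Nat.odd_iff.2 (by omega)) fun ⟨x, v⟩ hxv ↦ Nat.even_mul.2 ?_
    have hsum : x + v = m := mem_antidiagonal.1 hxv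
    by_cases hv : 2 ∣ v
    · exact (even_card_restrictedDivisors_left_or_right hP hP3 hP9 (by omega) (by omega)).symm
    · exact even_card_restrictedDivisors_left_or_right hP hP3 hP9 hv (by omega)
  rw [Nat.ModEq] at hcongr
  omega

lemma two_dvd_restrictedOverpartitions {m : ℕ} (hm : m ≠ 0) : 2 ∣ restrictedOverpartitions P m := by
  have hcongr := restrictedOverpartitions_add_modEq P hm
  rw [Nat.ModEq] at hcongr
  omega

end Congruence

theorem B29_mod8_12n7_and_mod2_12n1_general {ℓ : ℕ} (hℓ : 2 ∣ ℓ) (hℓ9 : ℓ.Coprime 9) (n : ℕ) :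
    8 ∣ biregOverpartitions ℓ 9 (12 * n + 7) ∧ ∀ m ≠ 0, 2 ∣ biregOverpartitions ℓ 9 m := by
  refine ⟨eight_dvd_restrictedOverpartitions (P := fun a ↦ ¬ ℓ ∣ a ∧ ¬ 9 ∣ a)
    (fun a h2 h3 ↦ ⟨fun h ↦ h2 (hℓ.trans h), by omega⟩) (fun a h3 ↦ ?_) (fun a h ↦ by omega)
    (by omega), fun m hm ↦ two_dvd_restrictedOverpartitions hm⟩
  have hℓ3 : ℓ.Coprime 3 := hℓ9.coprime_dvd_right (by norm_num)
  rw [hℓ3.dvd_mul_left]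
  omega

theorem B29_mod8_12n7_and_mod2_12n1 (n : ℕ) :
    8 ∣ biregOverpartitions 2 9 (12 * n + 7) ∧ 2 ∣ biregOverpartitions 2 9 (12 * n + 1) :=
  have h := B29_mod8_12n7_and_mod2_12n1_general (dvd_refl 2) (by norm_num) n
  ⟨h.1, h.2 _ (Nat.succ_ne_zero _)⟩
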